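/- Let 0 < a < 1 and b a natural number with a·b ≥ 1. Then for the covering numbers of the unit ball B_W of the RKHS of the Weierstrass fractal kernel in C([−1,1]), one has 2/ln(1/a) ≤ liminf_{ε→0⁺} ln(𝒞(ε, B_W)) / (ln(1/ε))² and limsup_{ε→0⁺} ln(𝒞(ε, B_W)) / (ln(1/ε))² ≤ 4/ln(1/a). In particular, ln(𝒞(ε, B_W)) is weakly equivalent to (ln(1/ε))² as ε → 0. -/

import Mathlib

open Real Metric Filter
open scoped ENNReal Topology

/-- The covering number of a set `A` in a metric space: the minimal number (in `ℕ∞`) of balls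
of radius `ε` needed to cover `A`. -/
noncomputable def coveringNumber {X : Type*} [PseudoMetricSpace X] (ε : ℝ) (A : Set X) : ℕ∞ :=
  sInf {n : ℕ∞ | ∃ t : Finset X, (t.card : ℕ∞) = n ∧ A ⊆ ⋃ c ∈ t, Metric.closedBall c ε}

/-- The image in `C([-1,1])` of the unit ball of the RKHS of the Weierstrass fractal kernel:
continuous functions `f(x) = ∑ₙ a^(n/2)(cₙ cos(bⁿπx) + dₙ sin(bⁿπx))` with square-summable
coefficients satisfying `∑ₙ (cₙ² + dₙ²) ≤ 1`. -/
def weierstrassBall (a : ℝ) (b : ℕ) : Set C(Set.Icc (-1 : ℝ) 1, ℝ) :=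
  {f | ∃ c d : ℕ → ℝ, Summable (fun n => c n ^ 2 + d n ^ 2) ∧
    (∑' n : ℕ, (c n ^ 2 + d n ^ 2)) ≤ 1 ∧
    ∀ x : Set.Icc (-1 : ℝ) 1, f x = ∑' n : ℕ, a ^ ((n : ℝ) / 2) *
      (c n * Real.cos ((b : ℝ) ^ n * π * (x : ℝ)) +
        d n * Real.sin ((b : ℝ) ^ n * π * (x : ℝ)))}


lemma wc_rpow (a : ℝ) (ha0 : 0 < a) (n : ℕ) : a ^ ((n : ℝ) / 2) = (√a) ^ n := by
  rw [Real.sqrt_eq_rpow, ← Real.rpow_natCast, ← Real.rpow_mul ha0.le]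
  congr 1; ring

noncomputable def wcTrig (b : ℕ) (p : Bool) (n : ℕ) (x : ℝ) : ℝ :=
  bif p then Real.cos ((b : ℝ) ^ n * π * x) else Real.sin ((b : ℝ) ^ n * π * x)

lemma wcTrig_continuous (b : ℕ) (p : Bool) (n : ℕ) : Continuous (wcTrig b p n) := by
  unfold wcTrig
  cases p <;> simp only [cond_true, cond_false] <;> fun_prop

lemma wcTrig_abs_le (b : ℕ) (p : Bool) (n : ℕ) (x : ℝ) : |wcTrig b p n x| ≤ 1 := by
  cases p <;> simp only [wcTrig, cond_true, cond_false]
  · exact Real.abs_sin_le_one _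
  · exact Real.abs_cos_le_one _

lemma wc_int_cos (k : ℤ) : ∫ x in (-1:ℝ)..1, Real.cos (k * π * x) = if k = 0 then 2 else 0 := by
  split_ifs with h
  · subst h; norm_num
  · have h0 : ((k : ℝ) * π) ≠ 0 := mul_ne_zero (by exact_mod_cast h) Real.pi_ne_zero
    rw [intervalIntegral.integral_comp_mul_left (fun x => Real.cos x) h0, integral_cos]
    simp [Real.sin_int_mul_pi]

lemma wc_int_sin (k : ℤ) : ∫ x in (-1:ℝ)..1, Real.sin (k * π * x) = 0 := by
  by_cases h : k = 0
  · subst h; norm_num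
  · have h0 : ((k : ℝ) * π) ≠ 0 := mul_ne_zero (by exact_mod_cast h) Real.pi_ne_zero
    rw [intervalIntegral.integral_comp_mul_left (fun x => Real.sin x) h0, integral_sin]
    simp [Real.cos_neg]

lemma wc_cc (k l : ℤ) : ∫ x in (-1:ℝ)..1, Real.cos (k * π * x) * Real.cos (l * π * x) =
    ((if k - l = 0 then 2 else 0) + (if k + l = 0 then 2 else 0)) / 2 := by
  rw [← wc_int_cos, ← wc_int_cos, ← intervalIntegral.integral_add
    (by apply Continuous.intervalIntegrable; fun_prop)
    (by apply Continuous.intervalIntegrable; fun_prop), ← intervalIntegral.integral_div]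
  congr 1; ext x
  have h1 : ((k - l : ℤ) : ℝ) * π * x = k * π * x - l * π * x := by push_cast; ring
  have h2 : ((k + l : ℤ) : ℝ) * π * x = k * π * x + l * π * x := by push_cast; ring
  rw [h1, h2, Real.cos_sub, Real.cos_add]; ring

lemma wc_ss (k l : ℤ) : ∫ x in (-1:ℝ)..1, Real.sin (k * π * x) * Real.sin (l * π * x) =
    ((if k - l = 0 then 2 else 0) - (if k + l = 0 then 2 else 0)) / 2 := by
  rw [← wc_int_cos, ← wc_int_cos, ← intervalIntegral.integral_sub
    (by apply Continuous.intervalIntegrable; fun_prop)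
    (by apply Continuous.intervalIntegrable; fun_prop), ← intervalIntegral.integral_div]
  congr 1; ext x
  have h1 : ((k - l : ℤ) : ℝ) * π * x = k * π * x - l * π * x := by push_cast; ring
  have h2 : ((k + l : ℤ) : ℝ) * π * x = k * π * x + l * π * x := by push_cast; ring
  rw [h1, h2, Real.cos_sub, Real.cos_add]; ring

lemma wc_sc (k l : ℤ) : ∫ x in (-1:ℝ)..1, Real.sin (k * π * x) * Real.cos (l * π * x) = 0 := by
  have : (0:ℝ) = ((∫ x in (-1:ℝ)..1, Real.sin ((k - l : ℤ) * π * x)) +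
      ∫ x in (-1:ℝ)..1, Real.sin ((k + l : ℤ) * π * x)) / 2 := by
    rw [wc_int_sin, wc_int_sin]; simp
  rw [this, ← intervalIntegral.integral_add
    (by apply Continuous.intervalIntegrable; fun_prop)
    (by apply Continuous.intervalIntegrable; fun_prop), ← intervalIntegral.integral_div]
  congr 1; ext x
  have h1 : ((k - l : ℤ) : ℝ) * π * x = k * π * x - l * π * x := by push_cast; ring
  have h2 : ((k + l : ℤ) : ℝ) * π * x = k * π * x + l * π * x := by push_cast; ring
  rw [h1, h2, Real.sin_sub, Real.sin_add]; ring

lemma wcTrig_orth (b : ℕ) (hb : 2 ≤ b) (p q : Bool) (n m : ℕ) :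
    ∫ x in (-1:ℝ)..1, wcTrig b p n x * wcTrig b q m x = if n = m ∧ p = q then 1 else 0 := by
  have hn : (0:ℤ) < (b:ℤ) ^ n := by positivity
  have hm : (0:ℤ) < (b:ℤ) ^ m := by positivity
  have h1 : ((b:ℤ) ^ n - (b:ℤ) ^ m = 0) ↔ n = m := by
    rw [sub_eq_zero]
    constructor
    · intro h
      exact Nat.pow_right_injective hb (by exact_mod_cast h)
    · rintro rfl; rfl
  have h2 : ¬ ((b:ℤ) ^ n + (b:ℤ) ^ m = 0) := by omega
  have cc := wc_cc ((b:ℤ)^n) ((b:ℤ)^m)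
  have ss := wc_ss ((b:ℤ)^n) ((b:ℤ)^m)
  have sc := wc_sc ((b:ℤ)^n) ((b:ℤ)^m)
  have cs := wc_sc ((b:ℤ)^m) ((b:ℤ)^n)
  simp only [h1, h2, if_false, Int.cast_pow, Int.cast_natCast] at cc ss sc cs
  cases p <;> cases q <;> simp only [wcTrig, cond_true, cond_false]
  · rw [ss]; split_ifs <;> simp_all
  · rw [sc]; simp
  · simp_rw [mul_comm (Real.cos _) (Real.sin _)]
    rw [cs]; simp
  · rw [cc]; split_ifs <;> simp_all

/-- finite Weierstrass sums -/
noncomputable def wcF (r : ℝ) (b N : ℕ) (v : Fin N × Bool → ℝ) (x : ℝ) : ℝ :=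
  ∑ i, v i * r ^ (i.1 : ℕ) * wcTrig b i.2 i.1 x

lemma wcF_continuous (r : ℝ) (b N : ℕ) (v : Fin N × Bool → ℝ) : Continuous (wcF r b N v) := by
  unfold wcF
  exact continuous_finsetSum _ fun i _ => continuous_const.mul (wcTrig_continuous _ _ _)

lemma wcF_eq (r : ℝ) (b N : ℕ) (v : Fin N × Bool → ℝ) (x : ℝ) :
    wcF r b N v x = ∑ n : Fin N, r ^ (n : ℕ) * (v (n, true) * Real.cos ((b : ℝ) ^ (n:ℕ) * π * x) +
      v (n, false) * Real.sin ((b : ℝ) ^ (n:ℕ) * π * x)) := by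
  unfold wcF
  rw [Fintype.sum_prod_type]
  refine Finset.sum_congr rfl fun n _ => ?_
  simp [wcTrig]; ring

/-- restriction as continuous map -/
noncomputable def wcC (r : ℝ) (b N : ℕ) (v : Fin N × Bool → ℝ) : C(Set.Icc (-1 : ℝ) 1, ℝ) :=
  ⟨fun x => wcF r b N v x, (wcF_continuous r b N v).comp continuous_subtype_val⟩

lemma wcF_coef (r : ℝ) (b N : ℕ) (hb : 2 ≤ b) (v : Fin N × Bool → ℝ) (j : Fin N × Bool) :
    ∫ x in (-1:ℝ)..1, wcF r b N v x * wcTrig b j.2 j.1 x = v j * r ^ (j.1 : ℕ) := by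
  unfold wcF
  simp_rw [Finset.sum_mul]
  rw [intervalIntegral.integral_finsetSum]
  · simp_rw [mul_assoc, intervalIntegral.integral_const_mul, wcTrig_orth b hb]
    rw [Finset.sum_eq_single j]
    · simp
    · intro i _ hij
      have : ¬ ((i.1:ℕ) = j.1 ∧ i.2 = j.2) := by
        rintro ⟨h1, h2⟩; exact hij (Prod.ext (Fin.ext h1) h2)
      simp [this]
    · simp
  · intro i _
    apply Continuous.intervalIntegrable
    exact (continuous_const.mul (wcTrig_continuous _ _ _)).mul (wcTrig_continuous _ _ _)

lemma wcC_mem (a : ℝ) (ha0 : 0 < a) (b N : ℕ) (hN : 0 < N) (v : Fin N × Bool → ℝ)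
    (hv : ∀ i, |v i| ≤ 1 / (2 * N)) : wcC (√a) b N v ∈ weierstrassBall a b := by
  let c : ℕ → ℝ := fun n => if h : n < N then v (⟨n, h⟩, true) else 0
  let d : ℕ → ℝ := fun n => if h : n < N then v (⟨n, h⟩, false) else 0
  have hc0 : ∀ n, n ∉ Finset.range N → c n = 0 := by
    intro n hn; simp only [Finset.mem_range] at hn; simp [c, hn]
  have hd0 : ∀ n, n ∉ Finset.range N → d n = 0 := by
    intro n hn; simp only [Finset.mem_range] at hn; simp [d, hn]
  have hN' : (1:ℝ) ≤ N := by exact_mod_cast hN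
  have hs : ∀ i, v i ^ 2 ≤ 1 / (2 * N) := by
    intro i
    have h1 : (1:ℝ) / (2 * N) ≤ 1 := by
      rw [div_le_one (by positivity)]; linarith
    have := hv i
    rw [← sq_abs]
    nlinarith [abs_nonneg (v i)]
  refine ⟨c, d, ?_, ?_, ?_⟩
  · apply summable_of_ne_finset_zero (s := Finset.range N)
    intro n hn; rw [hc0 n hn, hd0 n hn]; simp
  · rw [tsum_eq_sum (s := Finset.range N) (fun n hn => by rw [hc0 n hn, hd0 n hn]; simp),
      Finset.sum_range]
    calc _ ≤ ∑ n : Fin N, ((1:ℝ) / (2 * N) + 1 / (2 * N)) := by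
          refine Finset.sum_le_sum fun n _ => ?_
          simp only [c, d, n.2, dif_pos]
          exact add_le_add (hs _) (hs _)
      _ = 1 := by
          simp; field_simp; norm_num
  · intro x
    rw [tsum_eq_sum (s := Finset.range N) (fun n hn => by rw [hc0 n hn, hd0 n hn]; simp),
      Finset.sum_range]
    change wcF _ b N v x = _
    rw [wcF_eq]
    refine Finset.sum_congr rfl fun n _ => ?_
    rw [wc_rpow a ha0]
    simp only [c, d, n.2, dif_pos]

open MeasureTheory in
lemma wc_lower (a : ℝ) (ha0 : 0 < a) (b : ℕ) (hb : 2 ≤ b) (N : ℕ) (hN : 0 < N) (ε : ℝ) (hε : 0 < ε)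
    (t : Finset C(Set.Icc (-1 : ℝ) 1, ℝ)) (ht : weierstrassBall a b ⊆ ⋃ c ∈ t, closedBall c ε) :
    (∏ i : Fin N × Bool, (√a ^ (i.1 : ℕ) / (4 * N * ε))) ≤ t.card := by
  have hr : 0 < √a := Real.sqrt_pos.mpr ha0
  have hN' : (0:ℝ) < N := by exact_mod_cast hN
  let φ : C(Set.Icc (-1 : ℝ) 1, ℝ) → (Fin N × Bool → ℝ) := fun g j =>
    (∫ x in (-1:ℝ)..1, Set.IccExtend (by norm_num : (-1:ℝ) ≤ 1) g x * wcTrig b j.2 j.1 x) /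
      √a ^ (j.1 : ℕ)
  let h : Fin N × Bool → ℝ := fun j => 2 * ε / √a ^ (j.1 : ℕ)
  have hh : ∀ j, 0 < h j := fun j => by positivity
  have key : Set.Icc (fun _ : Fin N × Bool => -(1 / (2 * (N:ℝ)))) (fun _ => 1 / (2 * (N:ℝ))) ⊆
      ⋃ c ∈ t, Set.Icc (φ c - h) (φ c + h) := by
    intro v hv
    have hmem := ht (wcC_mem a ha0 b N hN v (fun i => abs_le.mpr ⟨hv.1 i, hv.2 i⟩))
    simp only [Set.mem_iUnion] at hmem ⊢
    obtain ⟨g, hg, hd⟩ := hmem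
    refine ⟨g, hg, ?_⟩
    have main : ∀ j, |v j - φ g j| ≤ h j := by
      intro j
      have hcont : Continuous (Set.IccExtend (by norm_num : (-1:ℝ) ≤ 1) g) := g.continuous.Icc_extend'
      have e1 : v j - φ g j = (∫ x in (-1:ℝ)..1, (wcF (√a) b N v x -
          Set.IccExtend (by norm_num : (-1:ℝ) ≤ 1) g x) * wcTrig b j.2 j.1 x) / √a ^ (j.1 : ℕ) := by
        simp_rw [sub_mul]
        rw [intervalIntegral.integral_sub, wcF_coef _ _ _ hb]
        · simp only [φ]; field_simp
        · exact ((wcF_continuous _ _ _ _).mul (wcTrig_continuous _ _ _)).intervalIntegrable _ _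
        · exact (hcont.mul (wcTrig_continuous _ _ _)).intervalIntegrable _ _
      rw [e1, abs_div, abs_of_pos (pow_pos hr _)]
      simp only [h]
      gcongr
      rw [← Real.norm_eq_abs]
      have := intervalIntegral.norm_integral_le_of_norm_le_const (a := (-1:ℝ)) (b := 1) (C := ε)
        (f := fun x => (wcF (√a) b N v x -
          Set.IccExtend (by norm_num : (-1:ℝ) ≤ 1) g x) * wcTrig b j.2 j.1 x) ?_
      · refine this.trans (le_of_eq ?_)
        norm_num; ring
      · intro x hx
        rw [Set.uIoc_of_le (by norm_num)] at hx
        have hx' : x ∈ Set.Icc (-1:ℝ) 1 := ⟨hx.1.le, hx.2⟩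
        rw [Set.IccExtend_of_mem _ _ hx', norm_mul]
        have d1 : ‖wcF (√a) b N v x - g ⟨x, hx'⟩‖ ≤ ε := by
          rw [← dist_eq_norm]
          exact (ContinuousMap.dist_apply_le_dist (f := wcC (√a) b N v) (g := g) ⟨x, hx'⟩).trans
            (mem_closedBall.mp hd)
        calc _ ≤ ε * 1 := by
              gcongr
              exact wcTrig_abs_le _ _ _ _
          _ = ε := mul_one _
    constructor
    · intro j; have := abs_le.mp (main j); simp only [Pi.sub_apply]; linarith
    · intro j; have := abs_le.mp (main j); simp only [Pi.add_apply]; linarith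
  have hvol := (measure_mono (μ := volume) key).trans (measure_biUnion_finset_le t _)
  simp only [Real.volume_Icc_pi, Pi.add_apply, Pi.sub_apply] at hvol
  have e2 : ∀ c : C(Set.Icc (-1 : ℝ) 1, ℝ), ∏ i, ENNReal.ofReal (φ c i + h i - (φ c i - h i)) =
      ENNReal.ofReal (∏ i, (2 * h i)) := by
    intro c
    rw [ENNReal.ofReal_prod_of_nonneg (fun i _ => by have := hh i; positivity)]
    refine Finset.prod_congr rfl fun i _ => ?_
    congr 1; ring
  simp_rw [e2] at hvol
  rw [← ENNReal.ofReal_prod_of_nonneg (fun i _ => by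
    have : (0:ℝ) < 1 / (2 * N) := by positivity
    linarith), Finset.sum_const, nsmul_eq_mul, ← ENNReal.ofReal_natCast,
    ← ENNReal.ofReal_mul (by positivity)] at hvol
  have hP : 0 < ∏ i, (2 * h i) := Finset.prod_pos fun i _ => by have := hh i; positivity
  rw [ENNReal.ofReal_le_ofReal_iff (by positivity)] at hvol
  rw [← div_le_iff₀ hP, ← Finset.prod_div_distrib] at hvol
  refine le_trans (le_of_eq ?_) hvol
  refine Finset.prod_congr rfl fun i _ => ?_
  simp only [h]
  field_simp
  norm_num


lemma wc_upper (a : ℝ) (ha0 : 0 < a) (ha1 : a < 1) (b : ℕ) (K N : ℕ) (hK : 0 < K) (ε : ℝ)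
    (h1 : (1 - √a)⁻¹ / K + 2 * (√a ^ N * (1 - √a)⁻¹) ≤ ε) :
    ∃ t : Finset C(Set.Icc (-1 : ℝ) 1, ℝ), t.card ≤ (2 * K + 1) ^ (N * 2) ∧
      weierstrassBall a b ⊆ ⋃ c ∈ t, closedBall c ε := by
  classical
  have hr : 0 < √a := Real.sqrt_pos.mpr ha0
  have hr1 : √a < 1 := by rw [Real.sqrt_lt' one_pos]; simpa using ha1
  have hK' : (0:ℝ) < K := by exact_mod_cast hK
  let G : (Fin N × Bool → Fin (2 * K + 1)) → C(Set.Icc (-1 : ℝ) 1, ℝ) := fun w =>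
    wcC (√a) b N (fun i => (((w i : ℕ) : ℝ) - K) / K)
  refine ⟨Finset.univ.image G, ?_, ?_⟩
  · refine Finset.card_image_le.trans (le_of_eq ?_)
    simp
  · rintro f ⟨c, d, hsum, hle, hf⟩
    have hterm : ∀ n, c n ^ 2 + d n ^ 2 ≤ 1 := fun n =>
      (hsum.le_tsum n (fun m _ => by positivity)).trans hle
    have hc : ∀ n, |c n| ≤ 1 := fun n => by
      rw [← sq_le_one_iff_abs_le_one]; nlinarith [hterm n, sq_nonneg (d n)]
    have hd : ∀ n, |d n| ≤ 1 := fun n => by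
      rw [← sq_le_one_iff_abs_le_one]; nlinarith [hterm n, sq_nonneg (c n)]
    have grid : ∀ y : ℝ, |y| ≤ 1 → ∃ k : Fin (2 * K + 1), |y - (((k : ℕ) : ℝ) - K) / K| ≤ 1 / (2 * K) := by
      intro y hy
      obtain ⟨hy1, hy2⟩ := abs_le.mp hy
      have hnn : 0 ≤ (y + 1) * K + 1 / 2 := by nlinarith
      have f1 := Nat.floor_le hnn
      have f2 := Nat.lt_floor_add_one ((y + 1) * K + 1 / 2)
      refine ⟨⟨⌊(y + 1) * K + 1 / 2⌋₊, ?_⟩, ?_⟩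
      · rw [Nat.floor_lt hnn]; push_cast; nlinarith
      · simp only
        set m : ℝ := (⌊(y + 1) * K + 1 / 2⌋₊ : ℝ)
        have : y - (m - K) / K = ((y + 1) * K - m) / K := by field_simp; ring
        rw [this, abs_div, abs_of_pos hK', div_le_div_iff₀ hK' (by positivity)]
        have : |(y + 1) * K - m| ≤ 1 / 2 := by rw [abs_le]; constructor <;> linarith
        nlinarith
    choose! g hg using grid
    let w : Fin N × Bool → Fin (2 * K + 1) := fun i => bif i.2 then g (c i.1) else g (d i.1)
    simp only [Set.mem_iUnion]
    refine ⟨G w, Finset.mem_image_of_mem _ (Finset.mem_univ _), ?_⟩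
    have hgeo := summable_geometric_of_lt_one hr.le hr1
    have hgeo' := tsum_geometric_of_lt_one hr.le hr1
    have hε : 0 ≤ ε := by
      refine le_trans ?_ h1
      have : 0 < (1 - √a)⁻¹ := inv_pos.mpr (by linarith)
      positivity
    rw [mem_closedBall, ContinuousMap.dist_le hε]
    intro x
    rw [Real.dist_eq, hf x]
    change |_ - wcF _ b N _ x| ≤ ε
    rw [wcF_eq]
    simp_rw [wc_rpow a ha0]
    set C : ℕ → ℝ := fun n => Real.cos ((b : ℝ) ^ n * π * (x:ℝ)) with hC
    set S : ℕ → ℝ := fun n => Real.sin ((b : ℝ) ^ n * π * (x:ℝ)) with hS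
    have hC1 : ∀ n, |C n| ≤ 1 := fun n => Real.abs_cos_le_one _
    have hS1 : ∀ n, |S n| ≤ 1 := fun n => Real.abs_sin_le_one _
    have comb : ∀ n (u v e : ℝ), |u| ≤ e → |v| ≤ e → |√a ^ n * (u * C n + v * S n)| ≤ 2 * e * √a ^ n := by
      intro n u v e hu hv
      have he : 0 ≤ e := (abs_nonneg u).trans hu
      rw [abs_mul, abs_of_pos (pow_pos hr n), mul_comm]
      gcongr
      calc |u * C n + v * S n| ≤ |u * C n| + |v * S n| := abs_add_le _ _
        _ = |u| * |C n| + |v| * |S n| := by rw [abs_mul, abs_mul]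
        _ ≤ e * 1 + e * 1 := by
            gcongr
            · exact hC1 n
            · exact hS1 n
        _ = 2 * e := by ring
    have hbd : ∀ n, ‖√a ^ n * (c n * C n + d n * S n)‖ ≤ 2 * √a ^ n := fun n => by
      simpa using comb n (c n) (d n) 1 (hc n) (hd n)
    have hs : Summable (fun n => √a ^ n * (c n * C n + d n * S n)) :=
      Summable.of_norm_bounded (hgeo.mul_left 2) hbd
    change |(∑' n, √a ^ n * (c n * C n + d n * S n)) - ∑ n : Fin N, √a ^ (n:ℕ) *
      (((((w (n, true) : ℕ) : ℝ) - K) / K) * C n + ((((w (n, false) : ℕ) : ℝ) - K) / K) * S n)| ≤ ε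
    rw [← hs.sum_add_tsum_nat_add N, Finset.sum_range, add_sub_right_comm, ← Finset.sum_sub_distrib]
    refine (abs_add_le _ _).trans (le_trans (add_le_add ?_ ?_) h1)
    · calc _ ≤ ∑ n : Fin N, 2 * (1 / (2 * (K:ℝ))) * √a ^ (n:ℕ) := by
            refine (Finset.abs_sum_le_sum_abs _ _).trans (Finset.sum_le_sum fun n _ => ?_)
            refine le_trans (le_of_eq ?_) (comb n (c n - (((w (n, true) : ℕ) : ℝ) - K) / K)
              (d n - (((w (n, false) : ℕ) : ℝ) - K) / K) (1 / (2 * K)) (hg _ (hc n)) (hg _ (hd n)))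
            congr 1; ring
        _ = (1 / K) * ∑ n ∈ Finset.range N, √a ^ n := by
            rw [Finset.sum_range, Finset.mul_sum]
            refine Finset.sum_congr rfl fun n _ => ?_
            field_simp
        _ ≤ (1 / K) * (1 - √a)⁻¹ := by
            gcongr
            rw [← hgeo']
            exact hgeo.sum_le_tsum _ (fun n _ => by positivity)
        _ = _ := by ring
    · rw [← Real.norm_eq_abs]
      refine tsum_of_norm_bounded (g := fun n => 2 * √a ^ (n + N)) ?_ (fun n => hbd (n + N))
      have := (hasSum_geometric_of_lt_one hr.le hr1).mul_left (2 * √a ^ N)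
      have e : (fun n => 2 * √a ^ (n + N)) = fun n => 2 * √a ^ N * √a ^ n := by
        funext n; rw [pow_add]; ring
      rw [e, ← mul_assoc]
      exact this

lemma wc_cov {X : Type*} [PseudoMetricSpace X] (ε : ℝ) (A : Set X) (t0 : Finset X)
    (h0 : A ⊆ ⋃ c ∈ t0, Metric.closedBall c ε) :
    ∃ t : Finset X, A ⊆ (⋃ c ∈ t, Metric.closedBall c ε) ∧
      ((coveringNumber ε A : ℝ≥0∞)).toReal = t.card ∧ t.card ≤ t0.card := by
  have hm : (t0.card : ℕ∞) ∈ {n : ℕ∞ | ∃ t : Finset X, (t.card : ℕ∞) = n ∧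
      A ⊆ ⋃ c ∈ t, Metric.closedBall c ε} := ⟨t0, rfl, h0⟩
  obtain ⟨t, ht1, ht2⟩ := csInf_mem ⟨_, hm⟩
  refine ⟨t, ht2, ?_, ?_⟩
  · unfold _root_.coveringNumber
    rw [← ht1]; simp
  · have : (t.card : ℕ∞) ≤ t0.card := by
      rw [ht1]; exact sInf_le hm
    exact_mod_cast this

/-- Explicit upper bound. -/
lemma wc_upper_log (a : ℝ) (ha0 : 0 < a) (ha1 : a < 1) (b : ℕ) (ε : ℝ) (hε : 0 < ε) (hε1 : ε ≤ 1) :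
    ∃ t : Finset C(Set.Icc (-1 : ℝ) 1, ℝ), weierstrassBall a b ⊆ (⋃ c ∈ t, closedBall c ε) ∧
      Real.log t.card ≤ 2 * (2 * (Real.log (1 / ε) + Real.log (4 * (1 - √a)⁻¹)) / Real.log (1 / a) + 1)
        * (Real.log (1 / ε) + Real.log (4 * (1 - √a)⁻¹ + 3)) := by
  have hr : 0 < √a := Real.sqrt_pos.mpr ha0
  have hr1 : √a < 1 := by rw [Real.sqrt_lt' one_pos]; simpa using ha1
  have hA : 1 ≤ (1 - √a)⁻¹ := by
    rw [one_le_inv₀ (by linarith)]; linarith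
  set A := (1 - √a)⁻¹ with hAdef
  have hA0 : 0 < A := by linarith
  have hl : 0 < Real.log (1 / a) := Real.log_pos (by rw [lt_div_iff₀ ha0]; linarith)
  have hL : 0 ≤ Real.log (1 / ε) := Real.log_nonneg (by rw [le_div_iff₀ hε]; linarith)
  have hlr : Real.log (√a) = - (Real.log (1 / a) / 2) := by
    rw [Real.log_sqrt ha0.le, one_div, Real.log_inv]; ring
  have hlA : 0 ≤ Real.log (4 * A) := Real.log_nonneg (by linarith)
  set L := Real.log (1 / ε) with hLdef
  set l := Real.log (1 / a) with hldef
  set y := 2 * (L + Real.log (4 * A)) / l with hy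
  have hy0 : 0 ≤ y := by positivity
  have hN1 := Nat.le_ceil y
  have hN2 := (Nat.ceil_lt_add_one hy0).le
  set N := ⌈y⌉₊
  have hK1 := Nat.le_ceil (2 * A / ε)
  have hK2 := (Nat.ceil_lt_add_one (show 0 ≤ 2 * A / ε by positivity)).le
  have hK0 : 0 < ⌈2 * A / ε⌉₊ := Nat.ceil_pos.mpr (by positivity)
  set K := ⌈2 * A / ε⌉₊
  have hK' : (0:ℝ) < K := by exact_mod_cast hK0
  have hrN : √a ^ N ≤ ε / (4 * A) := by
    rw [← Real.log_le_log_iff (by positivity) (by positivity), Real.log_pow, hlr,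
      Real.log_div (by positivity) (by positivity)]
    have e1 : Real.log ε = - L := by rw [hLdef, one_div, Real.log_inv]; ring
    have e2 : y * l = 2 * (L + Real.log (4 * A)) := by rw [hy]; field_simp
    rw [e1]
    nlinarith [mul_le_mul_of_nonneg_right hN1 hl.le]
  have hAK : A / K ≤ ε / 2 := by
    rw [div_le_iff₀ hε] at hK1
    rw [div_le_iff₀ hK']; linarith
  have hcond : A / K + 2 * (√a ^ N * A) ≤ ε := by
    have : √a ^ N * A ≤ ε / 4 := by
      calc √a ^ N * A ≤ ε / (4 * A) * A := by gcongr
        _ = ε / 4 := by field_simp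
    linarith
  obtain ⟨t, ht1, ht2⟩ := wc_upper a ha0 ha1 b K N hK0 ε hcond
  refine ⟨t, ht2, ?_⟩
  have hcard : (t.card : ℝ) ≤ ((2 * K + 1 : ℝ)) ^ (N * 2) := by exact_mod_cast ht1
  have h2K : (2 * K + 1 : ℝ) ≤ (1 / ε) * (4 * A + 3) := by
    have : (3:ℝ) ≤ 3 / ε := by rw [le_div_iff₀ hε]; linarith
    calc (2 * K + 1 : ℝ) ≤ 2 * (2 * A / ε + 1) + 1 := by linarith
      _ = 4 * A / ε + 3 := by ring
      _ ≤ 4 * A / ε + 3 / ε := by linarith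
      _ = _ := by ring
  have hlogK : Real.log (2 * K + 1) ≤ L + Real.log (4 * A + 3) := by
    rw [hLdef, ← Real.log_mul (by positivity) (by positivity)]
    exact Real.log_le_log (by positivity) h2K
  have hlogK0 : 0 ≤ Real.log (2 * K + 1) := Real.log_nonneg (by linarith)
  have h3 : Real.log t.card ≤ Real.log (((2 * K + 1 : ℝ)) ^ (N * 2)) := by
    rcases Nat.eq_zero_or_pos t.card with h | h
    · rw [h]; simp only [Nat.cast_zero, Real.log_zero, Real.log_pow]; positivity
    · exact Real.log_le_log (by exact_mod_cast h) hcard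
  refine h3.trans ?_
  rw [Real.log_pow]; push_cast
  calc (N : ℝ) * 2 * Real.log (2 * K + 1) ≤ (y + 1) * 2 * (L + Real.log (4 * A + 3)) := by
        gcongr
    _ = _ := by ring

/-- Explicit lower bound. -/
lemma wc_lower_log (a : ℝ) (ha0 : 0 < a) (ha1 : a < 1) (b : ℕ) (hb : 2 ≤ b) (ε : ℝ) (hε : 0 < ε)
    (hLl : Real.log (1 / a) ≤ Real.log (1 / ε))
    (t : Finset C(Set.Icc (-1 : ℝ) 1, ℝ)) (ht : weierstrassBall a b ⊆ ⋃ c ∈ t, closedBall c ε) :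
    (2 * Real.log (1 / ε) / Real.log (1 / a) - 1) * Real.log (1 / ε) -
      4 * Real.log (1 / ε) / Real.log (1 / a) *
        Real.log (8 / Real.log (1 / a) * Real.log (1 / ε)) ≤ Real.log t.card := by
  have hr : 0 < √a := Real.sqrt_pos.mpr ha0
  have hl : 0 < Real.log (1 / a) := Real.log_pos (by rw [lt_div_iff₀ ha0]; linarith)
  have hlr : Real.log (√a) = - (Real.log (1 / a) / 2) := by
    rw [Real.log_sqrt ha0.le, one_div, Real.log_inv]; ring
  have e1 : Real.log ε = - Real.log (1 / ε) := by rw [one_div, Real.log_inv]; ring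
  set L := Real.log (1 / ε) with hLdef
  set l := Real.log (1 / a) with hldef
  have hL : 0 < L := by linarith
  have hN2 := Nat.floor_le (show 0 ≤ 2 * L / l by positivity)
  have hN1 := (Nat.lt_floor_add_one (2 * L / l)).le
  have hN0 : 0 < ⌊2 * L / l⌋₊ := Nat.floor_pos.mpr (by rw [le_div_iff₀ hl]; linarith)
  set N := ⌊2 * L / l⌋₊
  have hN' : (1:ℝ) ≤ N := by exact_mod_cast hN0
  have hlow := wc_lower a ha0 b hb N hN0 ε hε t ht
  have hpos : 0 < ∏ i : Fin N × Bool, (√a ^ (i.1 : ℕ) / (4 * N * ε)) :=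
    Finset.prod_pos fun i _ => by positivity
  have hlog := Real.log_le_log hpos hlow
  refine le_trans ?_ hlog
  rw [Real.log_prod (fun i _ => by positivity)]
  have hterm : ∀ i : Fin N × Bool, Real.log (√a ^ (i.1 : ℕ) / (4 * N * ε)) =
      L - Real.log (4 * N) - l / 2 * ((i.1 : ℕ) : ℝ) := by
    intro i
    rw [Real.log_div (by positivity) (by positivity), Real.log_pow, hlr,
      Real.log_mul (by positivity) (by positivity), e1]
    ring
  simp_rw [hterm]
  rw [Fintype.sum_prod_type]
  simp only [Finset.sum_const, Finset.card_univ, Fintype.card_bool]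
  have hsum : ∑ n : Fin N, ((n : ℕ) : ℝ) = N * (N - 1) / 2 := by
    rw [← Finset.sum_range (fun n => (n : ℝ))]
    clear_value N
    clear hN2 hN1 hN0 hN' hlow hpos hlog hterm
    induction N with
    | zero => simp
    | succ k ih => rw [Finset.sum_range_succ, ih]; push_cast; ring
  have htot : ∑ n : Fin N, (2 • (L - Real.log (4 * N) - l / 2 * ((n : ℕ) : ℝ))) =
      2 * N * L - 2 * N * Real.log (4 * N) - l * (N * (N - 1) / 2) := by
    simp only [nsmul_eq_mul]
    rw [← Finset.mul_sum, Finset.sum_sub_distrib, ← Finset.mul_sum, hsum]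
    simp; ring
  rw [htot]
  have hNl : (N : ℝ) * l ≤ 2 * L := by rwa [le_div_iff₀ hl] at hN2
  have h4 : Real.log (4 * N) ≤ Real.log (8 / l * L) := by
    apply Real.log_le_log (by positivity)
    calc (4 * N : ℝ) ≤ 4 * (2 * L / l) := by linarith
      _ = _ := by ring
  have h40 : 0 ≤ Real.log (4 * N) := Real.log_nonneg (by linarith)
  have h5 : 2 * N * Real.log (4 * N) ≤ 4 * L / l * Real.log (8 / l * L) := by
    calc 2 * N * Real.log (4 * N) ≤ 2 * (2 * L / l) * Real.log (8 / l * L) := by gcongr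
      _ = _ := by ring
  have h6 : (2 * L / l - 1) * L ≤ N * L := by
    apply mul_le_mul_of_nonneg_right _ hL.le; linarith
  have h7 : l * (N * (N - 1) / 2) ≤ N * L := by
    nlinarith [mul_le_mul_of_nonneg_left hNl (show (0:ℝ) ≤ N by positivity)]
  linarith

/-- **Main theorem.** For `0 < a < 1` and `b : ℕ` with `a * b ≥ 1`, the
covering numbers of the unit RKHS ball `B_W` of the Weierstrass fractal kernel in `C([-1,1])`
satisfy
`2/ln(1/a) ≤ liminf_{ε→0⁺} ln 𝒞(ε, B_W) / (ln(1/ε))²` and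
`limsup_{ε→0⁺} ln 𝒞(ε, B_W) / (ln(1/ε))² ≤ 4/ln(1/a)`. -/
theorem weierstrass_coveringNumber_asymptotics
    (a : ℝ) (b : ℕ) (ha0 : 0 < a) (ha1 : a < 1) (hab : 1 ≤ a * b) :
    2 / Real.log (1 / a) ≤
      liminf (fun ε : ℝ =>
        Real.log ((coveringNumber ε (weierstrassBall a b) : ℝ≥0∞)).toReal /
          (Real.log (1 / ε)) ^ 2) (𝓝[>] (0 : ℝ)) ∧
    limsup (fun ε : ℝ =>
        Real.log ((coveringNumber ε (weierstrassBall a b) : ℝ≥0∞)).toReal /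
          (Real.log (1 / ε)) ^ 2) (𝓝[>] (0 : ℝ)) ≤
      4 / Real.log (1 / a) := by

  have hl : 0 < Real.log (1 / a) := Real.log_pos (by rw [lt_div_iff₀ ha0]; linarith)
  have hb : 2 ≤ b := by
    by_contra h
    have : (b : ℝ) ≤ 1 := by exact_mod_cast (by omega : b ≤ 1)
    nlinarith
  have hLtop : Tendsto (fun ε : ℝ => Real.log (1 / ε)) (𝓝[>] (0:ℝ)) atTop := by
    simp only [one_div]
    exact Real.tendsto_log_atTop.comp tendsto_inv_nhdsGT_zero
  set l := Real.log (1 / a) with hldef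
  set F : ℝ → ℝ := fun ε : ℝ =>
        Real.log ((coveringNumber ε (weierstrassBall a b) : ℝ≥0∞)).toReal /
          (Real.log (1 / ε)) ^ 2 with hF
  let p : ℝ := Real.log (4 * (1 - √a)⁻¹)
  let q : ℝ := Real.log (4 * (1 - √a)⁻¹ + 3)
  let U : ℝ → ℝ := fun L => 2 * (2 / l + (2 * p / l + 1) * L⁻¹) * (1 + q * L⁻¹)
  let V : ℝ → ℝ := fun L => 2 / l - L⁻¹ - 4 / l * (Real.log (8 / l * L) / (8 / l * L)) * (8 / l)
  have hU : Tendsto U atTop (𝓝 (4 / l)) := by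
    have h := tendsto_inv_atTop_zero (𝕜 := ℝ)
    have := (((h.const_mul (2 * p / l + 1)).const_add (2 / l)).const_mul 2).mul
      ((h.const_mul q).const_add 1)
    convert this using 2
    ring
  have hV : Tendsto V atTop (𝓝 (2 / l)) := by
    have h := tendsto_inv_atTop_zero (𝕜 := ℝ)
    have h8 : Tendsto (fun L : ℝ => 8 / l * L) atTop atTop :=
      tendsto_id.const_mul_atTop (by positivity)
    have hlog : Tendsto (fun x : ℝ => Real.log x / x) atTop (𝓝 0) := by
      simpa using Real.isLittleO_log_id_atTop.tendsto_div_nhds_zero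
    have := ((h.const_sub (2 / l))).sub (((hlog.comp h8).const_mul (4 / l)).mul_const (8 / l))
    have e : 2 / l - 0 - 4 / l * 0 * (8 / l) = 2 / l := by ring
    rw [e] at this
    exact this
  have hεpos : ∀ᶠ ε : ℝ in 𝓝[>] (0:ℝ), 0 < ε := self_mem_nhdsWithin
  have hε1 : ∀ᶠ ε : ℝ in 𝓝[>] (0:ℝ), ε ≤ 1 :=
    mem_nhdsWithin_of_mem_nhds (Iic_mem_nhds one_pos)
  have hLl := hLtop.eventually_ge_atTop l
  have hFU : ∀ᶠ ε : ℝ in 𝓝[>] (0:ℝ), F ε ≤ U (Real.log (1 / ε)) := by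
    filter_upwards [hεpos, hε1, hLl] with ε h0 h1 h2
    have hL : 0 < Real.log (1 / ε) := by linarith
    obtain ⟨t0, c0, b0⟩ := wc_upper_log a ha0 ha1 b ε h0 h1
    obtain ⟨t, c1, e1, hc⟩ := wc_cov ε _ t0 c0
    simp only [hF]
    rw [e1, div_le_iff₀ (by positivity)]
    have : Real.log t.card ≤ Real.log t0.card := by
      rcases Nat.eq_zero_or_pos t.card with h | h
      · rw [h]; simp only [Nat.cast_zero, Real.log_zero]; exact Real.log_natCast_nonneg _
      · exact Real.log_le_log (by exact_mod_cast h) (by exact_mod_cast hc)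
    refine this.trans (b0.trans (le_of_eq ?_))
    change _ = 2 * (2 / l + (2 * p / l + 1) * (Real.log (1 / ε))⁻¹) *
      (1 + q * (Real.log (1 / ε))⁻¹) * (Real.log (1 / ε)) ^ 2
    change 2 * (2 * (Real.log (1 / ε) + p) / l + 1) * (Real.log (1 / ε) + q) = _
    generalize Real.log (1 / ε) = L at hL
    clear_value p q l
    field_simp
    ring
  have hVF : ∀ᶠ ε : ℝ in 𝓝[>] (0:ℝ), V (Real.log (1 / ε)) ≤ F ε := by
    filter_upwards [hεpos, hε1, hLl] with ε h0 h1 h2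
    have hL : 0 < Real.log (1 / ε) := by linarith
    obtain ⟨t0, c0, b0⟩ := wc_upper_log a ha0 ha1 b ε h0 h1
    obtain ⟨t, c1, e1, hc⟩ := wc_cov ε _ t0 c0
    simp only [hF]
    rw [e1, le_div_iff₀ (by positivity)]
    refine le_trans (le_of_eq ?_) (wc_lower_log a ha0 ha1 b hb ε h0 h2 t c1)
    simp only [V]
    rw [← hldef]
    field_simp
  have hU' := hU.comp hLtop
  have hV' := hV.comp hLtop
  have bU : IsBoundedUnder (· ≤ ·) (𝓝[>] (0:ℝ)) F := hU'.isBoundedUnder_le.mono_le hFU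
  have bV : IsBoundedUnder (· ≥ ·) (𝓝[>] (0:ℝ)) F := hV'.isBoundedUnder_ge.mono_ge hVF
  constructor
  · rw [← hV'.liminf_eq]
    exact liminf_le_liminf hVF hV'.isBoundedUnder_ge bU.isCoboundedUnder_ge
  · rw [← hU'.limsup_eq]
    exact limsup_le_limsup hFU bV.isCoboundedUnder_le hU'.isBoundedUnder_le
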